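/- The group A_n^× acts transitively on the set of invertible antisymmetric elements of A_n via a·t = a t a*; equivalently, every invertible antisymmetric element t ∈ A_n^asym ∩ A_n^× can be written as t = Δ·a a* for some a ∈ A_n^×. -/

import Mathlib

open Polynomial Matrix

noncomputable section

abbrev TruncPoly (K : Type) [CommRing K] (n : ℕ) := AdjoinRoot (X ^ n : K[X])

def trStar (K : Type) [CommRing K] (σ : K →+* K) (n : ℕ) :
    TruncPoly K n →+* TruncPoly K n :=
  AdjoinRoot.lift ((AdjoinRoot.of _).comp σ) (-(AdjoinRoot.root _)) (by
    have h : (AdjoinRoot.root (X ^ n : K[X])) ^ n = 0 := by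
      rw [← AdjoinRoot.mk_X, ← map_pow, AdjoinRoot.mk_self]
    rw [eval₂_pow, eval₂_X, neg_pow, h, mul_zero])



theorem aux_norm (k K : Type) [Field k] [Fintype k] [Field K] [Fintype K] [Algebra k K]
    (hodd : Odd (Fintype.card k)) (hcardK : Fintype.card K = Fintype.card k ^ 2)
    (Δ : K) (hΔ : Δ ∉ Set.range (algebraMap k K))
    (hΔ2 : Δ ^ 2 ∈ Set.range (algebraMap k K))
    (σ : K →+* K) (hσk : ∀ c : k, σ (algebraMap k K c) = algebraMap k K c)
    (hσΔ : σ Δ = -Δ) (h2 : (2 : K) ≠ 0) (d : K) (hd : σ d = d) : ∃ b : K, d = b * σ b := by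
  have hΔ0 : Δ ≠ 0 := by
    rintro rfl
    exact hΔ ⟨0, map_zero _⟩
  let F : k × k → K := fun x => algebraMap k K x.1 + algebraMap k K x.2 * Δ
  have hinj : Function.Injective F := by
    rintro ⟨a, b⟩ ⟨a', b'⟩ h
    simp only [F] at h
    by_cases hb : b = b'
    · subst hb
      have := (algebraMap k K).injective (add_right_cancel h)
      rw [this]
    · exfalso
      apply hΔ
      have hb' : algebraMap k K (b - b') ≠ 0 := by
        rw [Ne, map_eq_zero, sub_eq_zero]
        exact hb
      refine ⟨(a' - a) / (b - b'), ?_⟩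
      rw [map_div₀, div_eq_iff hb', map_sub, map_sub]
      linear_combination -h
  have hbij : Function.Bijective F := by
    rw [Fintype.bijective_iff_injective_and_card]
    refine ⟨hinj, ?_⟩
    rw [Fintype.card_prod, hcardK, sq]
  obtain ⟨⟨a, b⟩, hab⟩ := hbij.2 d
  simp only [F] at hab
  obtain ⟨δ, hδ⟩ := hΔ2
  have hb0 : algebraMap k K b = 0 := by
    rw [← hab, map_add, map_mul, hσk, hσk, hσΔ] at hd
    have : 2 * (algebraMap k K b * Δ) = 0 := by linear_combination -hd
    simpa [h2, hΔ0] using this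
  have hδ0 : δ ≠ 0 := by
    rintro rfl
    rw [map_zero] at hδ
    exact hΔ0 (by simpa using hδ.symm)
  have hf : (C (1:k) * X ^ 2 + C 0 * X + C (-a)).degree = 2 := degree_quadratic one_ne_zero
  have hg : (C (-δ) * X ^ 2 + C 0 * X + C 0).degree = 2 := degree_quadratic (neg_ne_zero.2 hδ0)
  obtain ⟨u, v, huv⟩ := FiniteField.exists_root_sum_quadratic hf hg (Nat.odd_iff.1 hodd)
  simp at huv
  refine ⟨algebraMap k K u + algebraMap k K v * Δ, ?_⟩
  rw [map_add, map_mul, hσk, hσk, hσΔ, ← hab, hb0]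
  have := congrArg (algebraMap k K) huv
  simp only [map_add, map_neg, map_mul, map_pow, map_zero, hδ] at this
  linear_combination -this

theorem trStar_of (K : Type) [Field K] (σ : K →+* K) (n : ℕ) (c : K) :
    trStar K σ n (AdjoinRoot.of _ c) = AdjoinRoot.of _ (σ c) := by
  simp [trStar]

theorem aux_pow (K : Type) [Field K] (p : ℕ) [Fact p.Prime] [CharP K p]
    (σ : K →+* K) (n : ℕ) (hn : 0 < n) (s : TruncPoly K n) (hs : trStar K σ n s = s)
    (hu : IsUnit s) :
    ∃ c : K, c ≠ 0 ∧ σ c = c ∧ s ^ (p ^ n) = AdjoinRoot.of _ c := by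
  let ε : TruncPoly K n →+* K := AdjoinRoot.lift (RingHom.id K) 0 (by simp [hn.ne'])
  have hε : ε.comp (trStar K σ n) = σ.comp ε := by
    apply AdjoinRoot.ringHom_ext
    · ext c
      simp [ε, trStar]
    · simp [ε, trStar]
  obtain ⟨f, rfl⟩ := AdjoinRoot.mk_surjective s
  have hc : ε (AdjoinRoot.mk _ f) = f.eval 0 := by
    simp [ε, AdjoinRoot.lift_mk, coeff_zero_eq_eval_zero]
  have h0 : f.eval 0 ≠ 0 := by
    rw [← hc]
    exact (hu.map ε).ne_zero
  have hfix : σ (f.eval 0) = f.eval 0 := by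
    have := RingHom.congr_fun hε (AdjoinRoot.mk _ f)
    simp only [RingHom.comp_apply] at this
    rw [hs, hc] at this
    exact this.symm
  refine ⟨(f.eval 0) ^ (p ^ n), pow_ne_zero _ h0, by rw [map_pow, hfix], ?_⟩
  rw [← map_pow, ← AdjoinRoot.mk_C, AdjoinRoot.mk_eq_mk, map_pow, ← sub_pow_char_pow]
  have hX : X ∣ f - C (f.eval 0) := by
    rw [X_dvd_iff, coeff_sub, coeff_C_zero, coeff_zero_eq_eval_zero, sub_self]
  exact (pow_dvd_pow X (Nat.lt_pow_self (Fact.out : p.Prime).one_lt).le).trans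
    (pow_dvd_pow_of_dvd hX _)

/-- `A_nˣ` acts transitively on invertible antisymmetric elements via
`a·t = a t a*`; equivalently every invertible antisymmetric `t` is of the form `Δ·a a*`. -/
theorem transitive_on_asym_units
    (p t q : ℕ) (hp : p.Prime) (hp2 : Odd p) (ht : 0 < t) (hq : q = p ^ t)
    (k K : Type) [Field k] [Fintype k] [Field K] [Fintype K] [Algebra k K]
    (hcardk : Fintype.card k = q) (hcardK : Fintype.card K = q ^ 2)
    (Δ : K) (hΔ : Δ ∉ Set.range (algebraMap k K))
    (hΔ2 : Δ ^ 2 ∈ Set.range (algebraMap k K))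
    (σ : K →+* K) (hσk : ∀ c : k, σ (algebraMap k K c) = algebraMap k K c)
    (hσne : σ ≠ RingHom.id K) (hσΔ : σ Δ = -Δ)
    (n : ℕ) (hn : 0 < n) :
    (∀ t₁ t₂ : TruncPoly K n,
        trStar K σ n t₁ = -t₁ → IsUnit t₁ → trStar K σ n t₂ = -t₂ → IsUnit t₂ →
        ∃ a : TruncPoly K n, IsUnit a ∧ t₂ = a * t₁ * trStar K σ n a) ∧
    (∀ t₀ : TruncPoly K n, trStar K σ n t₀ = -t₀ → IsUnit t₀ →
        ∃ a : TruncPoly K n, IsUnit a ∧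
          t₀ = AdjoinRoot.of (X ^ n : K[X]) Δ * (a * trStar K σ n a)) := by
  have hp' : Fact p.Prime := ⟨hp⟩
  have hoddk : Odd (Fintype.card k) := by
    rw [hcardk, hq]
    exact hp2.pow
  have hchar : CharP K p := by
    have hcK : Fintype.card K = p ^ (t * 2) := by rw [hcardK, hq, pow_mul]
    exact charP_of_card_eq_prime_pow hcK
  have h2 : (2 : K) ≠ 0 := by
    apply Ring.two_ne_zero
    rw [ringChar.eq K p]
    rintro rfl
    exact absurd hp2 (by decide)
  have hΔ0 : Δ ≠ 0 := by
    rintro rfl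
    exact hΔ ⟨0, map_zero _⟩
  have main : ∀ t₀ : TruncPoly K n, trStar K σ n t₀ = -t₀ → IsUnit t₀ →
        ∃ a : TruncPoly K n, IsUnit a ∧
          t₀ = AdjoinRoot.of (X ^ n : K[X]) Δ * (a * trStar K σ n a) := by
    intro t₀ h₀ hu
    set D := AdjoinRoot.of (X ^ n : K[X]) Δ with hD
    set E := AdjoinRoot.of (X ^ n : K[X]) Δ⁻¹ with hE
    have hDE : D * E = 1 := by
      rw [hD, hE, ← map_mul, mul_inv_cancel₀ hΔ0, map_one]
    have hEs : trStar K σ n E = -E := by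
      rw [hE, trStar_of, map_inv₀, hσΔ, inv_neg, map_neg]
    have hEu : IsUnit E := IsUnit.of_mul_eq_one D (by rw [mul_comm, hDE])
    have hsu : IsUnit (E * t₀) := hEu.mul hu
    have hss : trStar K σ n (E * t₀) = E * t₀ := by
      rw [map_mul, hEs, h₀, neg_mul_neg]
    obtain ⟨c, hc0, hcσ, hc⟩ := aux_pow K p σ n hn _ hss hsu
    obtain ⟨b, hb⟩ := aux_norm k K hoddk (by rw [hcardK, hcardk]) Δ hΔ hΔ2 σ hσk hσΔ h2 c hcσ
    obtain ⟨j, hj⟩ := (hp2.pow : Odd (p ^ n))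
    obtain ⟨r, hr⟩ := hsu.exists_right_inv
    have hrs : trStar K σ n r = r := by
      have h1 := congrArg (trStar K σ n) hr
      rw [map_mul, hss, map_one] at h1
      exact hsu.mul_left_cancel (h1.trans hr.symm)
    have hb0 : b ≠ 0 := by
      rintro rfl
      exact hc0 (by simpa using hb)
    have hru : IsUnit r := IsUnit.of_mul_eq_one (E * t₀) (by rw [mul_comm, hr])
    refine ⟨AdjoinRoot.of _ b * r ^ j,
      ((isUnit_iff_ne_zero.2 hb0).map _).mul (hru.pow j), ?_⟩
    rw [map_mul, map_pow, hrs, trStar_of]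
    have hc2 : (E * t₀) ^ (2 * j + 1) = AdjoinRoot.of _ b * AdjoinRoot.of _ (σ b) := by
      rw [← hj, hc, hb, map_mul]
    have hrj : (E * t₀) ^ (2 * j) * r ^ (2 * j) = 1 := by rw [← mul_pow, hr, one_pow]
    calc t₀ = D * E * t₀ * ((E * t₀) ^ (2 * j) * r ^ (2 * j)) := by rw [hDE, hrj]; ring
      _ = D * ((E * t₀) ^ (2 * j + 1) * r ^ (2 * j)) := by ring
      _ = _ := by rw [hc2]; ring
  refine ⟨?_, main⟩
  intro t₁ t₂ h1 hu1 h2' hu2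
  obtain ⟨a, ha, rfl⟩ := main t₁ h1 hu1
  obtain ⟨b, hb, rfl⟩ := main t₂ h2' hu2
  obtain ⟨r, hr⟩ := ha.exists_right_inv
  have hru : IsUnit r := IsUnit.of_mul_eq_one a (by rw [mul_comm, hr])
  refine ⟨b * r, hb.mul hru, ?_⟩
  have hr' : trStar K σ n a * trStar K σ n r = 1 := by rw [← map_mul, hr, map_one]
  rw [map_mul]
  generalize trStar K σ n a = a' at *
  generalize trStar K σ n r = r' at *
  generalize trStar K σ n b = b' at *
  generalize AdjoinRoot.of (X ^ n : K[X]) Δ = D at *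
  calc D * (b * b') = D * (b * b') * ((a * r) * (a' * r')) := by rw [hr, hr']; ring
    _ = _ := by ring
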